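/- For every dimension d ≥ 2 and all real numbers 0 < ρ ≤ R there exists a constant C > 0 (depending only on d, ρ, R) with the following property: for every open bounded convex set Ω ⊆ ℝ^d such that closedBall(x₀, ρ) ⊆ Ω for some x₀ and Ω ⊆ ball(0, R), and for every continuously differentiable function u : ℝ^d → ℝ, one has ∫_{frontier Ω} u² dH^{d−1} ≤ C · ∫_Ω ( u(x)² + ‖∇u(x)‖² ) dx. -/

import Mathlib

open Metric MeasureTheory

namespace UTrace

/-- one-dimensional estimate along a ray -/
lemma ray_estimate {E : Type*} [NormedAddCommGroup E] [NormedSpace ℝ E]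
    (u : E → ℝ) (hu : ContDiff ℝ 1 u) (x₀ v : E) (T : ℝ) (hT : 0 < T) :
    u (x₀ + T • v) ^ 2 ≤ (2 / T + ‖v‖) *
      ∫ s in (T / 2)..T, (u (x₀ + s • v) ^ 2 + ‖fderiv ℝ u (x₀ + s • v)‖ ^ 2) := by
  have hud : Differentiable ℝ u := hu.differentiable (by norm_num)
  have hc : Continuous (fderiv ℝ u) := hu.continuous_fderiv (by norm_num)
  have hcu : Continuous u := hu.continuous
  have hline : ∀ s : ℝ, HasDerivAt (fun s : ℝ => x₀ + s • v) v s := fun s => by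
    simpa using ((hasDerivAt_id s).smul_const v).const_add x₀
  have hφ : ∀ s : ℝ, HasDerivAt (fun s : ℝ => u (x₀ + s • v))
      (fderiv ℝ u (x₀ + s • v) v) s := fun s =>
    (hud (x₀ + s • v)).hasFDerivAt.comp_hasDerivAt s (hline s)
  have hψ : ∀ s : ℝ, HasDerivAt (fun s : ℝ => (s - T / 2) * u (x₀ + s • v) ^ 2)
      (1 * u (x₀ + s • v) ^ 2 + (s - T / 2) *
        (2 * u (x₀ + s • v) * (fderiv ℝ u (x₀ + s • v) v))) s := fun s => by
    have h1 := ((hasDerivAt_id s).sub_const (T / 2)).mul ((hφ s).pow 2)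
    convert! h1 using 1
    simp
  have hcv : Continuous fun s : ℝ => fderiv ℝ u (x₀ + s • v) v := by
    have : Continuous fun s : ℝ => fderiv ℝ u (x₀ + s • v) := by fun_prop
    exact this.clm_apply continuous_const
  have hFTC := intervalIntegral.integral_eq_sub_of_hasDerivAt (a := T / 2) (b := T)
    (fun s _ => hψ s) (Continuous.intervalIntegrable (by fun_prop) _ _)
  have hle : (∫ s in (T / 2)..T, (1 * u (x₀ + s • v) ^ 2 + (s - T / 2) *
        (2 * u (x₀ + s • v) * (fderiv ℝ u (x₀ + s • v) v)))) ≤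
      ∫ s in (T / 2)..T, (1 + T / 2 * ‖v‖) *
        (u (x₀ + s • v) ^ 2 + ‖fderiv ℝ u (x₀ + s • v)‖ ^ 2) := by
    apply intervalIntegral.integral_mono_on (by linarith)
    · exact Continuous.intervalIntegrable (by fun_prop) _ _
    · exact Continuous.intervalIntegrable (by fun_prop) _ _
    · intro s hs
      set a := u (x₀ + s • v)
      set L := fderiv ℝ u (x₀ + s • v)
      have h1 : |L v| ≤ ‖L‖ * ‖v‖ := L.le_opNorm v
      have h2 : 2 * a * L v ≤ ‖v‖ * (a ^ 2 + ‖L‖ ^ 2) := by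
        calc 2 * a * L v ≤ |2 * a * L v| := le_abs_self _
          _ = 2 * |a| * |L v| := by simp [abs_mul]
          _ ≤ 2 * |a| * (‖L‖ * ‖v‖) := by gcongr
          _ = ‖v‖ * (2 * |a| * ‖L‖) := by ring
          _ ≤ ‖v‖ * (a ^ 2 + ‖L‖ ^ 2) := by
            gcongr
            nlinarith [sq_nonneg (|a| - ‖L‖), sq_abs a]
      have h3 : (s - T / 2) * (2 * a * L v) ≤ T / 2 * (‖v‖ * (a ^ 2 + ‖L‖ ^ 2)) := by
        have h4 : 0 ≤ s - T / 2 := by linarith [hs.1]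
        have h5 : s - T / 2 ≤ T / 2 := by linarith [hs.2]
        calc _ ≤ (s - T / 2) * (‖v‖ * (a ^ 2 + ‖L‖ ^ 2)) := by gcongr
          _ ≤ _ := by gcongr
      nlinarith [sq_nonneg ‖L‖]
  rw [hFTC, intervalIntegral.integral_const_mul] at hle
  have h6 : u (x₀ + T • v) ^ 2 = (2 / T) *
    ((T - T / 2) * u (x₀ + T • v) ^ 2 - (T / 2 - T / 2) * u (x₀ + (T / 2) • v) ^ 2) := by
    field_simp; ring
  have h7 : (2 / T + ‖v‖) = 2 / T * (1 + T / 2 * ‖v‖) := by field_simp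
  rw [h6, h7, mul_assoc]
  gcongr

/-- embedding of a face hyperplane -/
noncomputable def emb {n : ℕ} (i : Fin (n + 1)) (a : ℝ) (w : Fin n → ℝ) :
    EuclideanSpace ℝ (Fin (n + 1)) :=
  WithLp.toLp 2 (i.insertNth (α := fun _ => ℝ) a w)

lemma emb_smul {n : ℕ} (i : Fin (n + 1)) (s a : ℝ) (w : Fin n → ℝ) :
    s • emb i a w = emb i (s * a) (s • w) := by
  ext j
  refine Fin.succAboveCases i ?_ (fun j => ?_) j <;> simp [emb]

lemma continuous_emb {n : ℕ} (i : Fin (n + 1)) :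
    Continuous fun p : ℝ × (Fin n → ℝ) => emb i p.1 p.2 := by
  unfold emb
  refine (PiLp.continuous_toLp 2 _).comp ?_
  exact Continuous.finInsertNth i continuous_fst continuous_snd

lemma norm_le_of_coord {m : ℕ} (x : EuclideanSpace ℝ (Fin m)) (c : ℝ)
    (hx : ∀ j, |x j| ≤ c) : ‖x‖ ≤ m * c := by
  rcases Nat.eq_zero_or_pos m with rfl | hm
  · simp [EuclideanSpace.norm_eq]
  have hc : 0 ≤ c := (abs_nonneg _).trans (hx ⟨0, hm⟩)
  rw [EuclideanSpace.norm_eq]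
  apply Real.sqrt_le_iff.2 ⟨by positivity, ?_⟩
  have hm1 : (1 : ℝ) ≤ m := by exact_mod_cast hm
  calc ∑ j, ‖x j‖ ^ 2 ≤ ∑ _j : Fin m, c ^ 2 := by
        gcongr with j
        exact hx j
    _ = m * c ^ 2 := by simp
    _ ≤ (m * c) ^ 2 := by nlinarith [mul_nonneg (mul_nonneg (sub_nonneg.2 hm1) (by linarith : (0 : ℝ) ≤ m)) (sq_nonneg c)]

lemma norm_emb_le {n : ℕ} (i : Fin (n + 1)) (ε : ℝ) (hε : |ε| = 1) (w : Fin n → ℝ)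
    (hw : ‖w‖ ≤ 1) : ‖emb i ε w‖ ≤ (n : ℝ) + 1 := by
  have := norm_le_of_coord (emb i ε w) 1 (fun j => by
    refine Fin.succAboveCases i ?_ (fun j => ?_) j
    · simp [emb, hε]
    · simpa [emb] using (norm_le_pi_norm w j).trans hw)
  simpa using this

lemma one_le_norm_emb {n : ℕ} (i : Fin (n + 1)) (ε : ℝ) (hε : |ε| = 1) (w : Fin n → ℝ) :
    1 ≤ ‖emb i ε w‖ := by
  have := PiLp.norm_apply_le (emb i ε w) i
  simpa [emb, hε] using this

lemma norm_emb_sub_le {n : ℕ} (i : Fin (n + 1)) (ε : ℝ) (w w' : Fin n → ℝ) :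
    ‖emb i ε w - emb i ε w'‖ ≤ ((n : ℝ) + 1) * ‖w - w'‖ := by
  have := norm_le_of_coord (emb i ε w - emb i ε w') ‖w - w'‖ (fun j => by
    refine Fin.succAboveCases i ?_ (fun j => ?_) j
    · simp [emb]
    · simpa [emb] using (norm_le_pi_norm (w - w') j))
  simpa using this

lemma lintegral_emb {n : ℕ} (i : Fin (n + 1)) (ε : ℝ) (hε : |ε| = 1)
    (G : EuclideanSpace ℝ (Fin (n + 1)) → ENNReal) (hG : Measurable G) :
    ∫⁻ s : ℝ, ∫⁻ w : Fin n → ℝ, G (emb i (s * ε) w) = ∫⁻ x, G x := by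
  have h1 : ∫⁻ x, G x = ∫⁻ s : ℝ, ∫⁻ w : Fin n → ℝ, G (emb i s w) := by
    rw [← (PiLp.volume_preserving_toLp (Fin (n + 1))).lintegral_comp hG]
    rw [← ((volume_preserving_piFinSuccAbove (fun _ : Fin (n + 1) => ℝ) i).symm).lintegral_comp
      (f := fun a => G (WithLp.toLp 2 a)) (hG.comp (WithLp.measurable_toLp 2 _))]
    rw [Measure.volume_eq_prod, lintegral_prod]
    · rfl
    · exact (hG.comp (continuous_emb i).measurable).aemeasurable
  rw [h1]
  rcases eq_or_eq_neg_of_abs_eq hε with rfl | rfl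
  · simp
  · have := lintegral_neg_eq_self (μ := (volume : Measure ℝ))
      (fun s => ∫⁻ w : Fin n → ℝ, G (emb i s w))
    simpa using this

lemma lintegral_smul {n : ℕ} (s : ℝ) (hs : 0 < s) (f : (Fin n → ℝ) → ENNReal)
    (hf : Measurable f) :
    ∫⁻ w, f (s • w) = ENNReal.ofReal ((s ^ n)⁻¹) * ∫⁻ w, f w := by
  have h := Measure.map_addHaar_smul (volume : Measure (Fin n → ℝ)) hs.ne'
  rw [← lintegral_map hf (measurable_const_smul s), h, lintegral_smul_measure]
  simp [abs_of_pos (pow_pos hs n)]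

lemma face_integral {n : ℕ} (i : Fin (n + 1)) (ε : ℝ) (hε : |ε| = 1)
    (Ω : Set (EuclideanSpace ℝ (Fin (n + 1)))) (hΩ : IsOpen Ω)
    (u : EuclideanSpace ℝ (Fin (n + 1)) → ℝ) (hu : ContDiff ℝ 1 u)
    (x₀ : EuclideanSpace ℝ (Fin (n + 1))) (c : ℝ) (hc : 0 < c)
    (T : (Fin n → ℝ) → ℝ) (Q : Set (Fin n → ℝ)) (hQm : MeasurableSet Q) (hQ : ∀ w ∈ Q, ‖w‖ ≤ 1)
    (hT : ∀ w ∈ Q, c ≤ T w)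
    (hTΩ : ∀ w ∈ Q, ∀ s, 0 < s → s < T w → x₀ + s • emb i ε w ∈ Ω) :
    ∫⁻ w in Q, ENNReal.ofReal (u (x₀ + T w • emb i ε w) ^ 2) ≤
      ENNReal.ofReal ((2 / c + (n + 1)) * ((c / 2) ^ n)⁻¹) *
        ∫⁻ x in Ω, ENNReal.ofReal ((u x) ^ 2 + ‖fderiv ℝ u x‖ ^ 2) := by
  set h : EuclideanSpace ℝ (Fin (n + 1)) → ℝ := fun x => (u x) ^ 2 + ‖fderiv ℝ u x‖ ^ 2 with hh
  have hcf : Continuous (fderiv ℝ u) := hu.continuous_fderiv (by norm_num)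
  have hcu : Continuous u := hu.continuous
  have hch : Continuous h := by fun_prop
  have hh0 : ∀ x, 0 ≤ h x := fun x => by simp only [hh]; positivity
  set G : EuclideanSpace ℝ (Fin (n + 1)) → ENNReal :=
    Ω.indicator (fun x => ENNReal.ofReal (h x)) with hGdef
  have hG : Measurable G := (hch.measurable.ennreal_ofReal).indicator hΩ.measurableSet
  have hemb := continuous_emb i
  have key : ∀ w ∈ Q, ENNReal.ofReal (u (x₀ + T w • emb i ε w) ^ 2) ≤
      ENNReal.ofReal (2 / c + (n + 1)) *
        ∫⁻ s in Set.Ioi (c / 2), G (x₀ + s • emb i ε w) := by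
    intro w hw
    have hTw := hT w hw
    have hTp : 0 < T w := hc.trans_le hTw
    have hN := norm_emb_le i ε hε w (hQ w hw)
    have hch' : Continuous fun s : ℝ => h (x₀ + s • emb i ε w) := by fun_prop
    have h1 := ray_estimate u hu x₀ (emb i ε w) (T w) hTp
    rw [intervalIntegral.integral_of_le (by linarith), integral_Ioc_eq_integral_Ioo] at h1
    have hint : IntegrableOn (fun s : ℝ => h (x₀ + s • emb i ε w)) (Set.Ioo (T w / 2) (T w)) :=
      (hch'.integrableOn_Icc).mono_set Set.Ioo_subset_Icc_self
    have h2 : u (x₀ + T w • emb i ε w) ^ 2 ≤ (2 / c + (n + 1)) *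
        ∫ s in Set.Ioo (T w / 2) (T w), h (x₀ + s • emb i ε w) := by
      refine h1.trans ?_
      apply mul_le_mul_of_nonneg_right _ (integral_nonneg fun s => hh0 _)
      gcongr
    refine (ENNReal.ofReal_le_ofReal h2).trans ?_
    rw [ENNReal.ofReal_mul (by positivity),
      ofReal_integral_eq_lintegral_ofReal hint (ae_of_all _ fun s => hh0 _)]
    refine mul_le_mul' le_rfl ?_
    calc ∫⁻ s in Set.Ioo (T w / 2) (T w), ENNReal.ofReal (h (x₀ + s • emb i ε w))
        = ∫⁻ s in Set.Ioo (T w / 2) (T w), G (x₀ + s • emb i ε w) := by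
          refine setLIntegral_congr_fun measurableSet_Ioo fun s hs => ?_
          have := hTΩ w hw s (by linarith [hs.1]) hs.2
          simp [hGdef, this]
      _ ≤ _ := lintegral_mono_set fun s hs => by
          have := hs.1
          exact Set.mem_Ioi.2 (by linarith)
  have hmeas : Measurable (fun p : (Fin n → ℝ) × ℝ => G (x₀ + p.2 • emb i ε p.1)) := by
    apply hG.comp
    apply Continuous.measurable
    have : Continuous fun p : (Fin n → ℝ) × ℝ => emb i ε p.1 :=
      hemb.comp (continuous_const.prodMk continuous_fst)
    fun_prop
  calc ∫⁻ w in Q, ENNReal.ofReal (u (x₀ + T w • emb i ε w) ^ 2)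
      ≤ ∫⁻ w in Q, ENNReal.ofReal (2 / c + (n + 1)) *
        ∫⁻ s in Set.Ioi (c / 2), G (x₀ + s • emb i ε w) := setLIntegral_mono' hQm key
    _ ≤ ∫⁻ w, ENNReal.ofReal (2 / c + (n + 1)) *
        ∫⁻ s in Set.Ioi (c / 2), G (x₀ + s • emb i ε w) := setLIntegral_le_lintegral _ _
    _ = ENNReal.ofReal (2 / c + (n + 1)) * ∫⁻ w,
        ∫⁻ s in Set.Ioi (c / 2), G (x₀ + s • emb i ε w) :=
          lintegral_const_mul' _ _ ENNReal.ofReal_ne_top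
    _ = ENNReal.ofReal (2 / c + (n + 1)) * ∫⁻ s in Set.Ioi (c / 2), ∫⁻ w,
         G (x₀ + s • emb i ε w) := by
          rw [lintegral_lintegral_swap]
          exact hmeas.aemeasurable
    _ ≤ ENNReal.ofReal (2 / c + (n + 1)) * ∫⁻ s in Set.Ioi (c / 2),
         ENNReal.ofReal (((c / 2) ^ n)⁻¹) * ∫⁻ w, G (x₀ + emb i (s * ε) w) := by
          refine mul_le_mul' le_rfl ?_
          refine setLIntegral_mono' measurableSet_Ioi fun s hs => ?_
          have hs' : c / 2 < s := hs
          have hs0 : 0 < s := by linarith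
          simp_rw [emb_smul]
          rw [lintegral_smul s hs0 (fun w => G (x₀ + emb i (s * ε) w))]
          · gcongr
          · apply hG.comp
            apply Continuous.measurable
            have : Continuous fun w : (Fin n → ℝ) => emb i (s * ε) w :=
              hemb.comp (continuous_const.prodMk continuous_id)
            fun_prop
    _ ≤ ENNReal.ofReal (2 / c + (n + 1)) * ∫⁻ s,
         ENNReal.ofReal (((c / 2) ^ n)⁻¹) * ∫⁻ w, G (x₀ + emb i (s * ε) w) := by
          refine mul_le_mul' le_rfl ?_
          exact setLIntegral_le_lintegral _ _
    _ = ENNReal.ofReal (2 / c + (n + 1)) * (ENNReal.ofReal (((c / 2) ^ n)⁻¹) * ∫⁻ x, G x) := by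
          rw [lintegral_const_mul' _ _ ENNReal.ofReal_ne_top,
            lintegral_emb i ε hε (fun x => G (x₀ + x)) (hG.comp (measurable_const_add x₀)),
            lintegral_add_left_eq_self]
    _ = _ := by
          rw [← mul_assoc, ← ENNReal.ofReal_mul (by positivity), hGdef,
            lintegral_indicator hΩ.measurableSet]

lemma lintegral_image_le {n : ℕ} (F : (Fin n → ℝ) → EuclideanSpace ℝ (Fin (n + 1)))
    (hF : Measurable F) (Q : Set (Fin n → ℝ)) (K : NNReal)
    (hK : LipschitzOnWith K F Q) (f : EuclideanSpace ℝ (Fin (n + 1)) → ENNReal)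
    (hf : Measurable f) :
    ∫⁻ x in F '' Q, f x ∂(μH[(n : ℝ)]) ≤ (K : ENNReal) ^ n * ∫⁻ w in Q, f (F w) := by
  have hvol : (μH[(n : ℝ)] : Measure (Fin n → ℝ)) = volume := by
    have := hausdorffMeasure_pi_real (ι := Fin n)
    simpa using this
  have hle : (μH[(n : ℝ)] : Measure (EuclideanSpace ℝ (Fin (n + 1)))).restrict (F '' Q) ≤
      (K : ENNReal) ^ n • (volume.restrict Q).map F := by
    refine Measure.le_iff.2 fun s hs => ?_
    rw [Measure.restrict_apply hs, Measure.smul_apply, Measure.map_apply hF hs,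
      Measure.restrict_apply (hF hs)]
    have h1 : s ∩ F '' Q = F '' (F ⁻¹' s ∩ Q) := by
      rw [Set.inter_comm, Set.inter_comm (F ⁻¹' s), Set.image_inter_preimage]
    rw [h1]
    have h2 := (hK.mono (Set.inter_subset_right (s := F ⁻¹' s))).hausdorffMeasure_image_le
      (d := (n : ℝ)) (by positivity)
    rw [hvol, ENNReal.rpow_natCast] at h2
    exact h2
  calc _ ≤ ∫⁻ x, f x ∂((K : ENNReal) ^ n • (volume.restrict Q).map F) :=
        lintegral_mono' hle le_rfl
    _ = _ := by rw [lintegral_smul_measure, lintegral_map hf hF, smul_eq_mul]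

/-- sign attached to a boolean -/
noncomputable def sgn (b : Bool) : ℝ := if b then 1 else -1

lemma abs_sgn (b : Bool) : |sgn b| = 1 := by cases b <;> simp [sgn]

/-- every nonzero vector is a positive multiple of a point on a cube face -/
lemma exists_face {n : ℕ} (y : EuclideanSpace ℝ (Fin (n + 1))) (hy : y ≠ 0) :
    ∃ (i : Fin (n + 1)) (b : Bool) (w : Fin n → ℝ) (t : ℝ), ‖w‖ ≤ 1 ∧ 0 < t ∧
      y = t • emb i (sgn b) w := by
  obtain ⟨i, hi⟩ := Finite.exists_max (fun j => |y j|)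
  have hpos : 0 < |y i| := by
    by_contra hcon
    apply hy
    ext j
    have h1 := hi j
    have h2 : |y j| ≤ 0 := h1.trans (not_lt.1 hcon)
    simpa using h2
  refine ⟨i, decide (0 < y i), fun j => (|y i|)⁻¹ * y (i.succAbove j), |y i|, ?_, hpos, ?_⟩
  · rw [pi_norm_le_iff_of_nonneg zero_le_one]
    intro j
    rw [Real.norm_eq_abs, abs_mul, abs_inv, abs_abs, inv_mul_le_iff₀ hpos, mul_one]
    exact hi _
  · ext j
    refine Fin.succAboveCases i ?_ (fun j => ?_) j
    · by_cases h : 0 < y i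
      · simp [emb, sgn, h, abs_of_pos h]
      · simp [emb, sgn, h, abs_of_nonpos (not_lt.1 h)]
    · simp [emb, hpos.ne']

end UTrace

open UTrace

/-- Payne–Weinberger-type trace inequality with constant depending only on the
dimension and on uniform geometric bounds (inradius `ρ` and circumradius `R`)
of the convex domain: `∫_{∂Ω} u² dH^{d−1} ≤ C ∫_Ω (u² + ‖∇u‖²) dx`. -/
theorem uniform_trace_inequality
    {d : ℕ} (hd : 2 ≤ d) (ρ R : ℝ) (hρ : 0 < ρ) (hρR : ρ ≤ R) :
    ∃ C : ℝ, 0 < C ∧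
      ∀ Ω : Set (EuclideanSpace ℝ (Fin d)), IsOpen Ω →
        Bornology.IsBounded Ω → Convex ℝ Ω →
        (∃ x₀, closedBall x₀ ρ ⊆ Ω) → Ω ⊆ ball 0 R →
        ∀ u : EuclideanSpace ℝ (Fin d) → ℝ, ContDiff ℝ 1 u →
        (∫⁻ x in frontier Ω, ENNReal.ofReal ((u x) ^ 2) ∂(μH[(d : ℝ) - 1])) ≤
          ENNReal.ofReal C *
            ∫⁻ x in Ω, ENNReal.ofReal ((u x) ^ 2 + ‖fderiv ℝ u x‖ ^ 2) := by
  obtain ⟨n, rfl⟩ : ∃ n, d = n + 1 := ⟨d - 1, by omega⟩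
  have hR : 0 < R := hρ.trans_le hρR
  set c : ℝ := ρ / (n + 1) with hcdef
  have hc : 0 < c := by positivity
  set C₁ : ℝ := (2 / c + (n + 1)) * ((c / 2) ^ n)⁻¹ with hC₁
  have hC₁pos : 0 < C₁ := by positivity
  set K : ℝ := (2 * R + (2 * R) * (2 * R) * ρ⁻¹) * (n + 1) with hK
  have hKpos : 0 < K := by positivity
  refine ⟨2 * (n + 1) * (K ^ n * C₁), by positivity, ?_⟩
  intro Ω hΩ _ hconv ⟨x₀, hx₀⟩ hΩR u hu
  have hdim : (((n + 1 : ℕ) : ℝ) - 1) = n := by push_cast; ring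
  rw [hdim]
  -- the translated domain
  set S : Set (EuclideanSpace ℝ (Fin (n + 1))) := (fun x => x₀ + x) ⁻¹' Ω with hS
  have hSo : IsOpen S := hΩ.preimage (by fun_prop)
  have hSc : Convex ℝ S := hconv.translate_preimage_right x₀
  have hSball : ball 0 ρ ⊆ S := by
    intro y hy
    apply hx₀
    simp only [mem_ball, mem_closedBall, dist_zero_right] at *
    simpa using hy.le
  have hS0 : (0 : EuclideanSpace ℝ (Fin (n + 1))) ∈ S := hSball (by simpa using hρ)
  have hSn : S ∈ nhds (0 : EuclideanSpace ℝ (Fin (n + 1))) := hSo.mem_nhds hS0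
  have habs : Absorbent ℝ S := absorbent_nhds_zero hSn
  have hx₀R : ‖x₀‖ < R := by
    have : x₀ ∈ ball 0 R := hΩR (hx₀ (by simpa using hρ.le))
    simpa using this
  have hSR : S ⊆ closedBall 0 (2 * R) := by
    intro y hy
    have h1 : x₀ + y ∈ ball 0 R := hΩR hy
    rw [mem_ball_zero_iff] at h1
    rw [mem_closedBall_zero_iff]
    calc ‖y‖ = ‖(x₀ + y) - x₀‖ := by simp
      _ ≤ ‖x₀ + y‖ + ‖x₀‖ := norm_sub_le _ _
      _ ≤ 2 * R := by linarith
  have hfront : ∀ x ∈ frontier Ω, gauge S (x - x₀) = 1 := by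
    intro x hx
    rw [gauge_eq_one_iff_mem_frontier hSc hSn]
    have : frontier S = (fun x => x₀ + x) ⁻¹' frontier Ω :=
      ((Homeomorph.addLeft x₀).preimage_frontier Ω).symm
    rw [this]
    simpa using hx
  have hgc : Continuous (gauge S) := continuous_gauge hSc hSn
  have hglow : ∀ x, ‖x‖ / (2 * R) ≤ gauge S x := fun x =>
    le_gauge_of_subset_closedBall habs (by positivity) hSR
  have hgup : ∀ x, ρ * gauge S x ≤ ‖x‖ := fun x => mul_gauge_le_norm hSball
  have hglip : ∀ x y, |gauge S x - gauge S y| ≤ ρ⁻¹ * ‖x - y‖ := by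
    intro x y
    have h := (hSc.lipschitzWith_gauge (r := ⟨ρ, hρ.le⟩) hρ hSball).dist_le_mul x y
    rw [Real.dist_eq, dist_eq_norm] at h
    exact h
  -- parametrisation of the boundary
  set T : Fin (n + 1) × Bool → (Fin n → ℝ) → ℝ :=
    fun p w => (gauge S (emb p.1 (sgn p.2) w))⁻¹ with hT
  set F : Fin (n + 1) × Bool → (Fin n → ℝ) → EuclideanSpace ℝ (Fin (n + 1)) :=
    fun p w => x₀ + T p w • emb p.1 (sgn p.2) w with hF
  set Q : Set (Fin n → ℝ) := closedBall 0 1 with hQ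
  have hQ1 : ∀ w ∈ Q, ‖w‖ ≤ 1 := fun w hw => by simpa [hQ] using hw
  have hgpos : ∀ (p : Fin (n + 1) × Bool) w, (2 * R)⁻¹ ≤ gauge S (emb p.1 (sgn p.2) w) := by
    intro p w
    refine le_trans ?_ (hglow _)
    rw [inv_eq_one_div]
    gcongr
    exact one_le_norm_emb _ _ (abs_sgn _) _
  have hgpos' : ∀ (p : Fin (n + 1) × Bool) w, 0 < gauge S (emb p.1 (sgn p.2) w) := fun p w =>
    lt_of_lt_of_le (by positivity) (hgpos p w)
  have hTle : ∀ p w, T p w ≤ 2 * R := fun p w => inv_le_of_inv_le₀ (by positivity) (hgpos p w)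
  have hembc : ∀ p : Fin (n + 1) × Bool, Continuous fun w => emb p.1 (sgn p.2) w := fun p =>
    (continuous_emb p.1).comp (continuous_const.prodMk continuous_id)
  have hFc : ∀ p, Continuous (F p) := by
    intro p
    have h1 : Continuous (T p) := (hgc.comp (hembc p)).inv₀ fun w => (hgpos' p w).ne'
    exact continuous_const.add (h1.smul (hembc p))
  have hFlip : ∀ p, LipschitzOnWith (Real.toNNReal K) (F p) Q := by
    intro p
    refine LipschitzOnWith.of_dist_le_mul fun w _ w' _ => ?_
    rw [dist_eq_norm, dist_eq_norm]
    rw [Real.coe_toNNReal K hKpos.le]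
    set v := emb p.1 (sgn p.2) w with hv
    set v' := emb p.1 (sgn p.2) w' with hv'
    have h1 : F p w - F p w' = T p w • (v - v') + (T p w - T p w') • v' := by
      simp only [hF]
      rw [smul_sub, sub_smul]; abel
    have hTp : 0 < T p w := inv_pos.2 (hgpos' p w)
    have hTp' : 0 < T p w' := inv_pos.2 (hgpos' p w')
    have h2 : T p w - T p w' = T p w * T p w' * (gauge S v' - gauge S v) := by
      have e1 := (hgpos' p w).ne'
      have e2 := (hgpos' p w').ne'
      simp only [hT]
      rw [← hv] at e1 ⊢
      rw [← hv'] at e2 ⊢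
      field_simp
    have h3 : T p w' * ‖v'‖ ≤ 2 * R := by
      have := hglow v'
      simp only [hT]
      rw [inv_mul_le_iff₀ (hgpos' p w'), ← div_le_iff₀ (by positivity)]
      exact this
    have h4 : ‖v - v'‖ ≤ (n + 1) * ‖w - w'‖ := norm_emb_sub_le _ _ _ _
    calc ‖F p w - F p w'‖ ≤ ‖T p w • (v - v')‖ + ‖(T p w - T p w') • v'‖ := by
          rw [h1]; exact norm_add_le _ _
      _ = T p w * ‖v - v'‖ + T p w * (T p w' * ‖v'‖) * |gauge S v' - gauge S v| := by
          rw [norm_smul, norm_smul, h2, Real.norm_eq_abs, Real.norm_eq_abs, abs_mul, abs_mul,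
            abs_of_pos hTp, abs_of_pos hTp']
          ring
      _ ≤ (2 * R) * ‖v - v'‖ + (2 * R) * (2 * R) * (ρ⁻¹ * ‖v - v'‖) := by
          have := hglip v' v
          rw [norm_sub_rev v' v] at this
          have h5 := hTle p w
          gcongr
      _ = (2 * R + (2 * R) * (2 * R) * ρ⁻¹) * ‖v - v'‖ := by ring
      _ ≤ (2 * R + (2 * R) * (2 * R) * ρ⁻¹) * ((n + 1) * ‖w - w'‖) := by gcongr
      _ = K * ‖w - w'‖ := by rw [hK]; ring
  have hcover : frontier Ω ⊆ ⋃ p, F p '' Q := by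
    intro x hx
    have hg := hfront x hx
    have hne : x - x₀ ≠ 0 := by
      intro h0
      rw [h0, gauge_zero] at hg
      exact zero_ne_one hg
    obtain ⟨i, b, w, t, hw, ht, hxe⟩ := exists_face (x - x₀) hne
    refine Set.mem_iUnion.2 ⟨(i, b), w, by simpa [hQ] using hw, ?_⟩
    rw [hxe, gauge_smul_of_nonneg ht.le, smul_eq_mul] at hg
    have hTt : T (i, b) w = t := by
      simp only [hT]
      exact inv_eq_of_mul_eq_one_left hg
    simp only [hF]
    rw [hTt, ← hxe]
    abel
  have hm : Measurable fun x => ENNReal.ofReal ((u x) ^ 2) := by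
    have := hu.continuous
    exact (this.pow 2).measurable.ennreal_ofReal
  set I := ∫⁻ x in Ω, ENNReal.ofReal ((u x) ^ 2 + ‖fderiv ℝ u x‖ ^ 2) with hI
  have hpiece : ∀ p, ∫⁻ x in F p '' Q, ENNReal.ofReal ((u x) ^ 2) ∂(μH[(n : ℝ)]) ≤
      ENNReal.ofReal (K ^ n * C₁) * I := by
    intro p
    refine (lintegral_image_le (F p) (hFc p).measurable Q _ (hFlip p) _ hm).trans ?_
    have hKe : ((Real.toNNReal K : NNReal) : ENNReal) = ENNReal.ofReal K := rfl
    rw [hKe, ← ENNReal.ofReal_pow hKpos.le, ENNReal.ofReal_mul (by positivity), mul_assoc]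
    refine mul_le_mul' le_rfl ?_
    refine face_integral p.1 (sgn p.2) (abs_sgn _) Ω hΩ u hu x₀ c hc (T p) Q
      isClosed_closedBall.measurableSet hQ1 ?_ ?_
    · intro w hw
      simp only [hT]
      rw [le_inv_comm₀ hc (hgpos' p w), hcdef, inv_div, le_div_iff₀ hρ, mul_comm]
      exact (hgup _).trans (norm_emb_le _ _ (abs_sgn _) _ (hQ1 w hw))
    · intro w _ s hs hsT
      have : s • emb p.1 (sgn p.2) w ∈ S := by
        apply setOfPred_gauge_lt_one_subset_self hSc hS0 habs
        show gauge S _ < 1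
        rw [gauge_smul_of_nonneg hs.le, smul_eq_mul, ← lt_div_iff₀ (hgpos' p w), one_div]
        exact hsT
      exact this
  calc _ ≤ ∫⁻ x in ⋃ p, F p '' Q, ENNReal.ofReal ((u x) ^ 2) ∂(μH[(n : ℝ)]) :=
        lintegral_mono_set hcover
    _ ≤ ∑' p, ∫⁻ x in F p '' Q, ENNReal.ofReal ((u x) ^ 2) ∂(μH[(n : ℝ)]) :=
        lintegral_iUnion_le _ _
    _ ≤ ∑' _p : Fin (n + 1) × Bool, ENNReal.ofReal (K ^ n * C₁) * I :=
        ENNReal.tsum_le_tsum hpiece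
    _ = _ := by
        rw [tsum_fintype, Finset.sum_const, Finset.card_univ, Fintype.card_prod, Fintype.card_fin,
          Fintype.card_bool, nsmul_eq_mul, ENNReal.ofReal_mul (by positivity : (0 : ℝ) ≤ 2 * (n + 1)),
          mul_assoc]
        congr 1
        rw [← ENNReal.ofReal_natCast]
        congr 1
        push_cast
        ring
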